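/- For every n ≥ 0, the n-th Stirling coefficient γ_n satisfies γ_n = Σ_{k=0}^{2n} ((−1)^n 2^{n+k+1} Γ(3n+3/2) / (√π (2n+2k+1)(2n−k)!)) Σ_{j=0}^k ((−1)^j s(2n+k+j, j)/((k−j)! (2n+k+j)!)). -/

import Mathlib

open Finset

/-- The unsigned Stirling numbers of the first kind. -/
def stirling1 : ℕ → ℕ → ℕ
  | 0, 0 => 1
  | 0, _ + 1 => 0
  | _ + 1, 0 => 0
  | n + 1, j + 1 => stirling1 n j + n * stirling1 n (j + 1)

/-- Generalized binomial coefficient `C(ρ, k) = ρ(ρ-1)⋯(ρ-k+1)/k!` for real `ρ`. -/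
noncomputable def gbinomR (ρ : ℝ) (k : ℕ) : ℝ :=
  (∏ i ∈ Finset.range k, (ρ - i)) / (Nat.factorial k : ℝ)

/-- The formal power series `F(x) = 2(x - log(1+x))/x² = ∑_{m≥0} 2(-1)^m x^m/(m+2)`. -/
noncomputable def F : PowerSeries ℝ :=
  PowerSeries.mk fun m => 2 * (-1 : ℝ) ^ m / ((m : ℝ) + 2)

/-- For real `ρ`, the formal power series `F^ρ := ∑_{k≥0} C(ρ,k) (F-1)^k`; since `F - 1`
has zero constant term, the coefficient of `x^n` only involves `k ≤ n`. -/
noncomputable def Fpow (ρ : ℝ) : PowerSeries ℝ :=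
  PowerSeries.mk fun n =>
    ∑ k ∈ Finset.range (n + 1), gbinomR ρ k * PowerSeries.coeff n ((F - 1) ^ k)

/-- The `n`-th Stirling coefficient:
`γ_n = ((-1)^n (2n)!/(2^n n!)) · [x^{2n}] F^{-(n+1/2)}`. -/
noncomputable def stirlingCoeff (n : ℕ) : ℝ :=
  ((-1 : ℝ) ^ n * (Nat.factorial (2 * n) : ℝ) / (2 ^ n * (Nat.factorial n : ℝ))) *
    PowerSeries.coeff (2 * n) (Fpow (-((n : ℝ) + 1 / 2)))

/-!
Expanding `(F - 1)^k` in powers of `F` turns the truncated binomial series defining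
`[x^N] F^ρ` into a combination of the integer powers `[x^N] F^i`, `i ≤ N`, in which the weight of
`F^i` collapses to the single product `(-1)^(N+i) C(ρ, i) C(ρ-i-1, N-i)`. For `ρ = -x` this is,
up to sign, `Γ(x+N+1) / (Γ(x) (x+i) i! (N-i)!)`; the theorem is the case `x = n + 1/2`, `N = 2n`,
where the prefactor `(2n)!/(2^n n!)` equals `2^n Γ(n+1/2) / √π` and cancels `Γ(x)`.

The powers `F^i` are computed from `x² F = 2 (x - log (1+x))` and the binomial theorem: Stirling
numbers of the first kind enter as the coefficients of the powers of `log (1+x)`, whose recursion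
is the differential equation `(1+x) d/dx log^(j+1) = (j+1) log^j`.
-/

section GeneralizedBinomial

variable {R : Type*} [CommRing R] [BinomialRing R]

lemma add_one_mul_choose_add_one (r : R) (k : ℕ) :
    (k + 1) * Ring.choose r (k + 1) = Ring.choose r k * (r - k) := by
  simpa [nsmul_eq_mul, Ring.choose_one_right] using Ring.choose_smul_choose r k.le_succ

lemma sub_mul_choose_mul_choose_sub_one (r : R) {i N : ℕ} (hi : i ≤ N) :
    (r - i) * (Ring.choose r i * Ring.choose (r - i - 1) (N - i)) =
      N.choose i * ((N + 1) * Ring.choose r (N + 1)) := by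
  have h_trinomial := Ring.choose_smul_choose r (Nat.add_le_add_right hi 1)
  have h_absorb : ((N : R) + 1) * N.choose i = (N + 1).choose (i + 1) * (i + 1) :=
    mod_cast congrArg (Nat.cast (R := R)) (Nat.add_one_mul_choose_eq N i)
  rw [nsmul_eq_mul, Nat.add_sub_add_right, Nat.cast_succ, ← sub_sub] at h_trinomial
  linear_combination
    (-Ring.choose (r - i - 1) (N - i)) * add_one_mul_choose_add_one r i
      - (i + 1) * h_trinomial - Ring.choose r (N + 1) * h_absorb

lemma choose_mul_choose_succ_eq_add (r : R) {i N : ℕ} (hi : i ≤ N) :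
    (N + 1).choose i * Ring.choose r (N + 1) =
      Ring.choose r i * Ring.choose (r - i - 1) (N - i) +
        Ring.choose r i * Ring.choose (r - i - 1) (N + 1 - i) := by
  rw [← nsmul_eq_mul, Ring.choose_smul_choose r (Nat.le_succ_of_le hi), ← mul_add,
    Nat.succ_sub hi, ← Ring.choose_succ_succ, sub_add_cancel]

theorem sum_choose_smul_sub_one_pow {A : Type*} [CommRing A] [Algebra R A] (r : R) (a : A)
    (N : ℕ) :
    ∑ k ∈ range (N + 1), Ring.choose r k • (a - 1) ^ k =
      ∑ i ∈ range (N + 1),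
        ((-1) ^ (N + i) * (Ring.choose r i * Ring.choose (r - i - 1) (N - i))) • a ^ i := by
  induction N with
  | zero => simp
  | succ N ih =>
    have h_new : Ring.choose r (N + 1) • (a - 1) ^ (N + 1) = ∑ i ∈ range (N + 2),
        ((-1) ^ (N + 1 + i) * ((N + 1).choose i * Ring.choose r (N + 1))) • a ^ i := by
      rw [sub_pow, smul_sum]
      refine sum_congr rfl fun i _ => ?_
      simp only [Algebra.smul_def, map_mul, map_pow, map_neg, map_one, map_natCast, one_pow]
      ring
    rw [sum_range_succ, ih, h_new, sum_range_succ _ (N + 1), sum_range_succ _ (N + 1),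
      ← add_assoc, ← sum_add_distrib]
    congr 1
    · refine sum_congr rfl fun i hi => ?_
      rw [choose_mul_choose_succ_eq_add r (mem_range_succ_iff.mp hi), ← add_smul]
      ring_nf
    · simp

end GeneralizedBinomial

section LogarithmPowers

open PowerSeries Nat

lemma coeff_one_add_X_mul_derivative {R : Type*} [CommSemiring R] (f : R⟦X⟧) (m : ℕ) :
    coeff m ((1 + X) * d⁄dX R f) = (m + 1) * coeff (m + 1) f + m * coeff m f := by
  rw [add_mul, one_mul, map_add, coeff_derivative, mul_comm]
  cases m <;> simp [coeff_succ_X_mul, coeff_derivative, mul_comm]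

lemma one_add_X_mul_derivative_log (A : Type*) [CommRing A] [Algebra ℚ A] :
    (1 + X) * d⁄dX A (log A) = 1 := by
  rw [deriv_log]
  ext m
  cases m <;> simp [add_mul, coeff_succ_X_mul, coeff_one, pow_succ]

theorem factorial_mul_coeff_log_pow (A : Type*) [CommRing A] [Algebra ℚ A] (m j : ℕ) :
    (m ! : A) * coeff m (log A ^ j) = (-1) ^ (m + j) * j ! * stirlingFirst m j := by
  induction m generalizing j with
  | zero => cases j <;> simp
  | succ m ih =>
    cases j with
    | zero => simp [coeff_one]
    | succ j =>
      have h_ode : (1 + X) * d⁄dX A (log A ^ (j + 1)) = C (j + 1 : A) * log A ^ j := by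
        rw [derivative_pow, Nat.add_sub_cancel, map_add, map_natCast, map_one, cast_succ]
        linear_combination ((j + 1) * log A ^ j) * one_add_X_mul_derivative_log A
      have h_rec := congrArg (coeff m) h_ode
      rw [coeff_one_add_X_mul_derivative, coeff_C_mul] at h_rec
      have ih_succ := ih (j + 1)
      rw [factorial_succ j] at ih_succ ⊢
      rw [factorial_succ m, stirlingFirst_succ_succ]
      push_cast at ih_succ ⊢
      linear_combination (m ! : A) * h_rec - m * ih_succ + (j + 1) * ih j

theorem coeff_X_sub_log_pow (K : Type*) [Field K] [CharZero K] (N i : ℕ) :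
    coeff (N + i) ((X - log K) ^ i) =
      (-1) ^ N * i ! * ∑ j ∈ range (i + 1),
        (-1 : K) ^ j * stirlingFirst (N + j) j / ((i - j)! * (N + j)!) := by
  have h_log (j : ℕ) : coeff (N + j) (log K ^ j) =
      (-1) ^ N * j ! * stirlingFirst (N + j) j / (N + j)! := by
    rw [eq_div_iff (cast_ne_zero.mpr (factorial_ne_zero _)), mul_comm,
      factorial_mul_coeff_log_pow, add_assoc, ← two_mul, pow_add, (even_two_mul j).neg_one_pow,
      mul_one]
  rw [sub_eq_neg_add, add_pow, map_sum, mul_sum]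
  refine sum_congr rfl fun j hj => ?_
  have hji : j ≤ i := mem_range_succ_iff.mp hj
  have h_factorial : (j ! : K) ≠ 0 := cast_ne_zero.mpr j.factorial_ne_zero
  have h_term : (-log K) ^ j * X ^ (i - j) * (i.choose j : K⟦X⟧) =
      C ((-1) ^ j * i.choose j : K) * (log K ^ j * X ^ (i - j)) := by
    rw [neg_pow, map_mul, map_pow, map_neg, map_one, map_natCast]
    ring
  rw [h_term, coeff_C_mul, show N + i = N + j + (i - j) by omega, coeff_mul_X_pow, h_log,
    cast_choose K hji]
  field_simp

end LogarithmPowers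

section GammaValues

open Nat

lemma factorial_mul_choose_neg_mul_Gamma {x : ℝ} (hx : ∀ k : ℕ, x ≠ -k) (m : ℕ) :
    m ! * Ring.choose (-x) m * Real.Gamma x = (-1) ^ m * Real.Gamma (x + m) := by
  induction m with
  | zero => simp
  | succ m ih =>
    have hxm : x + m ≠ 0 := fun h => hx m (eq_neg_of_add_eq_zero_left h)
    rw [cast_succ, ← add_assoc, Real.Gamma_add_one hxm, factorial_succ]
    push_cast
    linear_combination
      (m ! * Real.Gamma x) * add_one_mul_choose_add_one (-x) m - (x + m) * ih

lemma choose_neg_mul_choose_mul_Gamma {x : ℝ} (hx : ∀ k : ℕ, x ≠ -k) {i N : ℕ} (hi : i ≤ N) :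
    Ring.choose (-x) i * Ring.choose (-x - i - 1) (N - i) * Real.Gamma x =
      (-1) ^ N * Real.Gamma (x + N + 1) / ((x + i) * i ! * (N - i)!) := by
  have hxi : x + i ≠ 0 := fun h => hx i (eq_neg_of_add_eq_zero_left h)
  have h_absorb := sub_mul_choose_mul_choose_sub_one (-x) hi
  have h_Gamma := factorial_mul_choose_neg_mul_Gamma hx (N + 1)
  have h_choose : (N.choose i * i ! * (N - i)! : ℝ) = N ! :=
    mod_cast choose_mul_factorial_mul_factorial hi
  rw [factorial_succ, cast_succ, ← add_assoc] at h_Gamma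
  push_cast at h_Gamma
  rw [eq_div_iff (by positivity)]
  linear_combination
    (-i ! * (N - i)! * Real.Gamma x) * h_absorb - h_Gamma
      - ((N + 1) * Ring.choose (-x) (N + 1) * Real.Gamma x) * h_choose

lemma factorial_two_mul_div_eq_Gamma (n : ℕ) :
    ((2 * n)! / (2 ^ n * n !) : ℝ) = 2 ^ n * Real.Gamma (n + 1 / 2) / √Real.pi := by
  have h_dup := Real.Gamma_mul_Gamma_add_half (n + 1 / 2)
  have h_two : (2 : ℝ) ^ (1 - 2 * (n + 1 / 2 : ℝ)) = (2 ^ n * 2 ^ n)⁻¹ := by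
    rw [← pow_add, ← Real.rpow_natCast, ← Real.rpow_neg zero_le_two]
    push_cast
    ring_nf
  rw [h_two, add_assoc, add_halves, Real.Gamma_nat_eq_factorial,
    show (2 * (n + 1 / 2) : ℝ) = (2 * n : ℕ) + 1 by push_cast; ring,
    Real.Gamma_nat_eq_factorial] at h_dup
  field_simp at h_dup ⊢
  linear_combination -h_dup

end GammaValues

section StirlingCoefficients

open PowerSeries Nat

lemma stirling1_eq_stirlingFirst (n k : ℕ) : stirling1 n k = stirlingFirst n k := by
  fun_induction stirling1 n k <;> simp_all [stirlingFirst, add_comm]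

lemma gbinomR_eq_choose (ρ : ℝ) (k : ℕ) : gbinomR ρ k = Ring.choose ρ k := by
  rw [gbinomR, div_eq_iff (by positivity)]
  induction k with
  | zero => simp
  | succ k ih =>
    rw [prod_range_succ, ih, factorial_succ]
    push_cast
    linear_combination (-k ! : ℝ) * add_one_mul_choose_add_one ρ k

lemma coeff_Fpow (ρ : ℝ) (N : ℕ) :
    coeff N (Fpow ρ) = ∑ i ∈ range (N + 1),
      (-1) ^ (N + i) * (Ring.choose ρ i * Ring.choose (ρ - i - 1) (N - i)) * coeff N (F ^ i) := by
  have h_coeff := congrArg (coeff N) (sum_choose_smul_sub_one_pow ρ F N)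
  simpa only [map_sum, coeff_smul, smul_eq_mul, Fpow, coeff_mk, gbinomR_eq_choose] using h_coeff

lemma coeff_Fpow_neg_mul_Gamma {x : ℝ} (hx : ∀ k : ℕ, x ≠ -k) (N : ℕ) :
    coeff N (Fpow (-x)) * Real.Gamma x = Real.Gamma (x + N + 1) *
      ∑ i ∈ range (N + 1), (-1) ^ i / ((x + i) * i ! * (N - i)!) * coeff N (F ^ i) := by
  rw [coeff_Fpow, sum_mul, mul_sum]
  refine sum_congr rfl fun i hi => ?_
  have h_sign : (-1 : ℝ) ^ N * (-1) ^ N = 1 := by simp [← mul_pow]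
  rw [mul_right_comm, mul_assoc _ _ (Real.Gamma x),
    choose_neg_mul_choose_mul_Gamma hx (mem_range_succ_iff.mp hi), pow_add]
  linear_combination ((-1) ^ i * Real.Gamma (x + N + 1) / ((x + i) * i ! * (N - i)!) *
    coeff N (F ^ i)) * h_sign

lemma X_sq_mul_F : X ^ 2 * F = C 2 * (X - log ℝ) := by
  ext m
  rcases m with _ | _ | m
  · simp
  · rw [coeff_X_pow_mul']
    simp
  · rw [add_assoc, coeff_X_pow_mul, coeff_C_mul, map_sub, coeff_X, coeff_log, F, coeff_mk]
    simp [pow_succ, mul_div_assoc, neg_div]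

lemma coeff_F_pow (N i : ℕ) :
    coeff N (F ^ i) = (-1) ^ (N + i) * 2 ^ i * i ! * ∑ j ∈ range (i + 1),
      (-1 : ℝ) ^ j * stirling1 (N + i + j) j / ((i - j)! * (N + i + j)!) := by
  have h_shift : coeff N (F ^ i) = coeff (N + i + i) ((X ^ 2 * F) ^ i) := by
    rw [mul_pow, ← pow_mul, two_mul, add_assoc, coeff_X_pow_mul]
  simp only [h_shift, X_sq_mul_F, mul_pow, ← map_pow, coeff_C_mul, coeff_X_sub_log_pow,
    stirling1_eq_stirlingFirst]
  ring

lemma stirlingCoeff_eq_Gamma_mul (n : ℕ) :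
    stirlingCoeff n = (-1) ^ n * 2 ^ n / √Real.pi *
      (coeff (2 * n) (Fpow (-(n + 1 / 2))) * Real.Gamma (n + 1 / 2)) := by
  rw [stirlingCoeff, mul_div_assoc, factorial_two_mul_div_eq_Gamma]
  ring

end StirlingCoefficients

/-- New representation of the Stirling coefficients in terms of the unsigned Stirling
numbers of the first kind (formula (18) of the paper). -/
theorem stirlingCoeff_eq_sum_stirling1 (n : ℕ) :
    stirlingCoeff n =
      ∑ k ∈ Finset.range (2 * n + 1),
        ((-1 : ℝ) ^ n * 2 ^ (n + k + 1) * Real.Gamma (3 * n + 3 / 2) /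
            (Real.sqrt Real.pi * (2 * (n : ℝ) + 2 * k + 1) * (Nat.factorial (2 * n - k) : ℝ))) *
          ∑ j ∈ Finset.range (k + 1),
            (-1 : ℝ) ^ j * (stirling1 (2 * n + k + j) j : ℝ) /
              ((Nat.factorial (k - j) : ℝ) * (Nat.factorial (2 * n + k + j) : ℝ)) := by
  have h_half (k : ℕ) : (n + 1 / 2 : ℝ) ≠ -k := by
    have : (0 : ℝ) < n + 1 / 2 + k := by positivity
    linarith
  have h_arg : (n + 1 / 2 + (2 * n : ℕ) + 1 : ℝ) = 3 * n + 3 / 2 := by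
    push_cast
    ring
  rw [stirlingCoeff_eq_Gamma_mul, coeff_Fpow_neg_mul_Gamma h_half, h_arg, mul_sum, mul_sum]
  refine sum_congr rfl fun k _ => ?_
  rw [coeff_F_pow, pow_add (-1 : ℝ) (2 * n) k, (even_two_mul n).neg_one_pow]
  have h_sign : (-1 : ℝ) ^ k * (-1) ^ k = 1 := by simp [← mul_pow]
  generalize (∑ j ∈ range (k + 1), _ : ℝ) = S
  field_simp
  linear_combination (2 ^ (n + k + 1) * (2 * n + 2 * k + 1) * S) * h_sign
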